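/- A Cohen–Macaulay Λ-module M is indecomposable if and only if M is isomorphic as a Λ-module to (i,j) for some pair 1 ≤ i < j ≤ n. -/

import Mathlib

set_option synthInstance.maxHeartbeats 1000000
set_option maxHeartbeats 1000000

open Polynomial Matrix

noncomputable section

/-- The exponent `c_{ij}` (with 0-based indices `i j : Fin n`, corresponding to the 1-based
`c_{i+1,j+1} = δ_{i+1>j+1} + δ_{i+1>j+2} − δ_{(i+1,j+1)=(1,n)}`). -/
def cExp (n : ℕ) (i j : Fin n) : ℤ :=
  (if (j : ℕ) < (i : ℕ) then 1 else 0) + (if (j : ℕ) + 1 < (i : ℕ) then 1 else 0)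
    - (if (i : ℕ) = 0 ∧ (j : ℕ) = n - 1 then 1 else 0)

/-- The subset `x^c · K[x]` of `K(x)`. -/
def xPow (K : Type*) [Field K] (c : ℤ) : Set (RatFunc K) :=
  {f | ∃ p : Polynomial K, f = RatFunc.X ^ c * algebraMap (Polynomial K) (RatFunc K) p}

/-- The carrier set of the tiled order `Λ ⊆ M_n(K(x))`:
matrices whose `(i,j)` entry lies in `x^{c_{ij}}·K[x]`. -/
def lambdaCarrier (K : Type*) [Field K] (n : ℕ) : Set (Matrix (Fin n) (Fin n) (RatFunc K)) :=
  {M | ∀ i j, M i j ∈ xPow K (cExp n i j)}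

/-- Exponent pattern of the module `(i,j)` (1-based `i j`; `k : ℕ` is a 0-based coordinate,
so the 1-based coordinate is `k+1`): `0` for `k+1 ≤ i`, `1` for `i < k+1 ≤ j`, `2` otherwise. -/
def dExp (i j k : ℕ) : ℤ := if k + 1 ≤ i then 0 else if k + 1 ≤ j then 1 else 2

/-- The carrier set of the `Λ`-module `(i,j)` inside the column space `K(x)^n`. -/
def ijSet (K : Type*) [Field K] (n : ℕ) (i j : ℕ) : Set (Fin n → RatFunc K) :=
  {v | ∀ k : Fin n, v k ∈ xPow K (dExp i j (k : ℕ))}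

/-- Column vectors form a module over the matrix ring via `mulVec`. -/
instance matVecModule (K : Type*) [Field K] (n : ℕ) :
    Module (Matrix (Fin n) (Fin n) (RatFunc K)) (Fin n → RatFunc K) where
  smul M v := M.mulVec v
  one_smul v := Matrix.one_mulVec v
  mul_smul M N v := (Matrix.mulVec_mulVec v M N).symm
  smul_zero M := Matrix.mulVec_zero M
  smul_add M u v := Matrix.mulVec_add M u v
  add_smul M N v := Matrix.add_mulVec M N v
  zero_smul v := Matrix.zero_mulVec v

universe u

section Lattice

variable {K : Type*} [Field K] {L : Type*} [AddCommGroup L] [Module K[X] L]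

/-- A `K`-linear functional on a finite free `K[X]`-module that vanishes on `X • L` lifts to a
`K[X]`-linear functional. Consequently vectors outside a submodule `C ⊇ X • L` are separated from
`C` by surjective `K[X]`-linear functionals modulo `X`. -/
theorem exists_surjective_separating_functional [Module.Finite K[X] L]
    [Module.IsTorsionFree K[X] L] (C : Submodule K[X] L)
    (hC : ∀ l : L, (X : K[X]) • l ∈ C) {b : L} (hb : b ∉ C) :
    ∃ f : L →ₗ[K[X]] K[X], Function.Surjective f ∧ (∀ c ∈ C, X ∣ f c) ∧ (f b).coeff 0 = 1 := by
  let : Module K L := Module.compHom L (Polynomial.C : K →+* K[X])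
  have smul_def : ∀ (a : K) (l : L), a • l = (Polynomial.C a : K[X]) • l := fun _ _ => rfl
  have : IsScalarTower K K[X] L := ⟨fun a p l => by
    rw [smul_def, smul_smul, Polynomial.smul_eq_C_mul]⟩
  have : Module.Free K[X] L := Module.free_of_finite_type_torsion_free'
  obtain ⟨g₀, hg₀b, hg₀⟩ := Submodule.exists_le_ker_of_notMem
    (p := C.restrictScalars K) (v := b) (by simpa using hb)
  obtain ⟨g, hgb, hg⟩ : ∃ g : L →ₗ[K] K, g b = 1 ∧ ∀ c ∈ C, g c = 0 :=
    ⟨(g₀ b)⁻¹ • g₀, by simp [hg₀b], fun c hc => by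
      have : g₀ c = 0 := hg₀ hc
      simp [this]⟩
  let e := Module.Free.chooseBasis K[X] L
  let f : L →ₗ[K[X]] K[X] := e.constr K[X] fun i => Polynomial.C (g (e i))
  have hfe : ∀ i, f (e i) = Polynomial.C (g (e i)) := fun i => e.constr_basis _ _ i
  have hgp : ∀ (p : K[X]) (l : L), g (p • l) = p.coeff 0 * g l := fun p l => by
    conv_lhs => rw [← Polynomial.divX_mul_X_add p, add_smul, mul_comm, mul_smul, ← smul_def, map_add,
      hg _ (hC _), zero_add, g.map_smul, smul_eq_mul]
  have hfg : ∀ l, (f l).coeff 0 = g l := fun l => by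
    rw [← e.sum_repr l, map_sum, map_sum, Polynomial.finsetSum_coeff]
    exact Finset.sum_congr rfl fun i _ => by rw [f.map_smul, hfe, hgp]; simp
  refine ⟨f, fun p => ?_, fun c hc => Polynomial.X_dvd_iff.2 (by rw [hfg, hg c hc]),
    by rw [hfg, hgb]⟩
  obtain ⟨i, hi⟩ : ∃ i, g (e i) ≠ 0 := by
    by_contra! h
    have : g b = 0 := by
      rw [← e.sum_repr b, map_sum]
      simp [hgp, h]
    simp [this] at hgb
  refine ⟨(p * Polynomial.C (g (e i))⁻¹) • e i, ?_⟩
  rw [map_smul, hfe, smul_eq_mul, mul_assoc, ← Polynomial.C_mul, inv_mul_cancel₀ hi]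
  simp

/-- If a functional is surjective and takes a value congruent to `1` modulo `X` at `b`, then `b`
may be modified, up to a scalar factor, by an element of `X ^ 2 • L` so that the value is `1`. -/
theorem exists_smul_add_X_sq_smul_eq_one {f : L →ₗ[K[X]] K[X]} (hf : Function.Surjective f) {b : L}
    (hb : (f b).coeff 0 = 1) : ∃ (p : K[X]) (w : L), f (p • b + (X ^ 2 : K[X]) • w) = 1 := by
  obtain ⟨g, hg⟩ : X ∣ f b - 1 := Polynomial.X_dvd_iff.2 (by simp [hb])
  obtain ⟨w, hw⟩ := hf (g ^ 2)
  refine ⟨1 - X * g, w, ?_⟩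
  rw [map_add, map_smul, map_smul, hw, eq_add_of_sub_eq hg]
  simp only [smul_eq_mul]
  ring

/-- A chain `L = N 0 ⊇ N 1 ⊇ ⋯ ⊇ N (n - 1) ⊇ X ^ 2 • L` with `X • N k ⊆ N (k + 1)` and
`N (n - 1) ⊆ X • L` splits off a chain of rank one. -/
theorem exists_rank_one_summand_of_chain [Nontrivial L] [Module.Finite K[X] L]
    [Module.IsTorsionFree K[X] L] {n : ℕ} (hn : 0 < n) (N : ℕ → Submodule K[X] L)
    (h0 : N 0 = ⊤) (hanti : ∀ k l, k ≤ l → l < n → N l ≤ N k)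
    (hX : ∀ k, k + 1 < n → ∀ m ∈ N k, (X : K[X]) • m ∈ N (k + 1))
    (hX2 : ∀ m : L, (X ^ 2 : K[X]) • m ∈ N (n - 1))
    (hlast : ∀ m ∈ N (n - 1), ∃ l, m = (X : K[X]) • l) :
    ∃ i j : ℕ, 1 ≤ i ∧ i < j ∧ j ≤ n ∧ ∃ (b : L) (f : L →ₗ[K[X]] K[X]), f b = 1 ∧
      ∀ k < n, (X ^ (dExp i j k).toNat : K[X]) • b ∈ N k ∧
        ∀ m ∈ N k, (X ^ (dExp i j k).toNat : K[X]) ∣ f m := by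
  classical
  let XL : Submodule K[X] L := LinearMap.range (LinearMap.lsmul K[X] L X)
  have mem_XL : ∀ m, m ∈ XL ↔ ∃ l, m = (X : K[X]) • l := fun m =>
    ⟨fun ⟨l, hl⟩ => ⟨l, hl.symm⟩, fun ⟨l, hl⟩ => ⟨l, hl.symm⟩⟩
  have hXinj : Function.Injective fun l : L => (X : K[X]) • l :=
    smul_right_injective L Polynomial.X_ne_zero
  have : Module.Free K[X] L := Module.free_of_finite_type_torsion_free'
  obtain ⟨m₀, hm₀⟩ : ∃ m₀ : L, m₀ ∉ XL := by
    obtain ⟨i⟩ := (Module.Free.chooseBasis K[X] L).index_nonempty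
    refine ⟨Module.Free.chooseBasis K[X] L i, fun h => ?_⟩
    obtain ⟨l, hl⟩ := (mem_XL _).1 h
    have := congrArg (fun v => (Module.Free.chooseBasis K[X] L).repr v i) hl
    simp only [Module.Basis.repr_self, Finsupp.single_eq_same, map_smul, Finsupp.smul_apply,
      smul_eq_mul] at this
    exact Polynomial.not_isUnit_X (IsUnit.of_mul_eq_one _ this.symm)
  let P : ℕ → Prop := fun k => ∃ m ∈ N k, m ∉ XL
  set i := Nat.findGreatest P (n - 1) with hi
  have hPi : P i := Nat.findGreatest_spec (Nat.zero_le _) ⟨m₀, by simp [h0], hm₀⟩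
  have hin : i < n - 1 := by
    refine lt_of_le_of_ne (Nat.findGreatest_le _) fun h => ?_
    obtain ⟨m, hm, hmX⟩ := hPi
    exact hmX ((mem_XL m).2 (hlast m (h ▸ hm)))
  have hPgt : ∀ k, i < k → k < n → N k ≤ XL := fun k hk hkn m hm => by
    by_contra h
    exact absurd (Nat.le_findGreatest (P := P) (n := n - 1) (by omega) ⟨m, hm, h⟩) (by omega)
  let Q : ℕ → Prop := fun k => ∃ m ∈ N i, m ∉ XL ∧ (X : K[X]) • m ∈ N k
  set j := Nat.findGreatest Q (n - 1) with hj
  have hQi : Q (i + 1) := by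
    obtain ⟨m, hm, hmX⟩ := hPi
    exact ⟨m, hm, hmX, hX i (by omega) m hm⟩
  have hij : i + 1 ≤ j := Nat.le_findGreatest (by omega) hQi
  have hjn : j ≤ n - 1 := Nat.findGreatest_le _
  obtain ⟨b₀, hb₀i, hb₀X, hb₀j⟩ : Q j := Nat.findGreatest_spec (m := i + 1) (by omega) hQi
  obtain ⟨C, hCX, hb₀C, hC⟩ : ∃ C : Submodule K[X] L, XL ≤ C ∧ b₀ ∉ C ∧
      ∀ k, j < k → k < n → ∀ m ∈ N k, ∃ c ∈ C, m = (X : K[X]) • c := by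
    by_cases hjl : j = n - 1
    · exact ⟨XL, le_rfl, hb₀X, fun k hk hkn => by omega⟩
    refine ⟨(N (j + 1)).comap (LinearMap.lsmul K[X] L X), fun m hm => ?_, fun h => ?_,
      fun k hk hkn m hm => ?_⟩
    · obtain ⟨l, rfl⟩ := (mem_XL m).1 hm
      refine hanti (j + 1) (n - 1) (by omega) (by omega) ?_
      simpa [smul_smul, sq] using hX2 l
    · exact absurd (Nat.le_findGreatest (P := Q) (n := n - 1) (by omega) ⟨b₀, hb₀i, hb₀X, h⟩)
        (by omega)
    · obtain ⟨c, rfl⟩ := (mem_XL m).1 (hPgt k (by omega) hkn hm)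
      exact ⟨c, hanti (j + 1) k hk hkn hm, rfl⟩
  obtain ⟨f, hfs, hfC, hfb₀⟩ := exists_surjective_separating_functional C
    (fun l => hCX ((mem_XL _).2 ⟨l, rfl⟩)) hb₀C
  obtain ⟨p, w, hb⟩ := exists_smul_add_X_sq_smul_eq_one hfs hfb₀
  have hX2' : ∀ k < n, ∀ l : L, (X ^ 2 : K[X]) • l ∈ N k := fun k hk l =>
    hanti k (n - 1) (by omega) (by omega) (hX2 l)
  refine ⟨i + 1, j + 1, by omega, by omega, by omega, p • b₀ + (X ^ 2 : K[X]) • w, f, hb,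
    fun k hk => ?_⟩
  unfold dExp
  split_ifs with h1 h2
  · refine ⟨?_, fun m _ => by simp⟩
    simp only [Int.toNat_zero, pow_zero, one_smul]
    exact hanti k i (by omega) (by omega)
      (add_mem (Submodule.smul_mem _ _ hb₀i) (hX2' i (by omega) w))
  · simp only [Int.toNat_one, pow_one]
    refine ⟨?_, fun m hm => ?_⟩
    · rw [smul_add, smul_comm X p, smul_comm X (X ^ 2 : K[X])]
      exact add_mem (Submodule.smul_mem _ _ (hanti k j (by omega) (by omega) hb₀j)) (hX2' k hk _)
    · obtain ⟨l, rfl⟩ := (mem_XL m).1 (hPgt k (by omega) hk hm)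
      simp
  · refine ⟨hX2' k hk _, fun m hm => ?_⟩
    obtain ⟨c, hc, rfl⟩ := hC k (by omega) hk m hm
    obtain ⟨q, hq⟩ := hfC c hc
    refine ⟨q, ?_⟩
    rw [map_smul, hq, smul_eq_mul, show (2 : ℤ).toNat = 2 from rfl]
    ring

end Lattice

section XPow

variable {K : Type*} [Field K]

theorem zero_mem_xPow (c : ℤ) : (0 : RatFunc K) ∈ xPow K c := ⟨0, by simp⟩

theorem X_zpow_mem_xPow {a c : ℤ} (h : c ≤ a) : (RatFunc.X : RatFunc K) ^ a ∈ xPow K c := by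
  refine ⟨X ^ (a - c).toNat, ?_⟩
  rw [map_pow, RatFunc.algebraMap_X, ← zpow_natCast, ← zpow_add₀ RatFunc.X_ne_zero,
    Int.toNat_of_nonneg (by omega)]
  congr 1
  omega

theorem mem_xPow_iff_of_nonneg {c : ℤ} (hc : 0 ≤ c) {f : RatFunc K} :
    f ∈ xPow K c ↔ ∃ p : K[X], X ^ c.toNat ∣ p ∧ f = algebraMap K[X] (RatFunc K) p := by
  have key : (RatFunc.X : RatFunc K) ^ c = algebraMap K[X] (RatFunc K) (X ^ c.toNat) := by
    rw [map_pow, RatFunc.algebraMap_X, ← zpow_natCast, Int.toNat_of_nonneg hc]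
  constructor
  · rintro ⟨p, rfl⟩
    exact ⟨X ^ c.toNat * p, dvd_mul_right _ _, by rw [key, map_mul]⟩
  · rintro ⟨_, ⟨p, rfl⟩, rfl⟩
    exact ⟨p, by rw [key, map_mul]⟩

theorem exists_X_mul_eq_algebraMap_of_mem_xPow {c : ℤ} (hc : -1 ≤ c) {f : RatFunc K}
    (hf : f ∈ xPow K c) : ∃ p : K[X], RatFunc.X * f = algebraMap K[X] (RatFunc K) p := by
  obtain ⟨p, rfl⟩ := hf
  obtain ⟨q, -, hq⟩ := (mem_xPow_iff_of_nonneg (c := 1 + c) (by omega)).1 ⟨p, rfl⟩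
  exact ⟨q, by rw [← hq, zpow_add₀ RatFunc.X_ne_zero, zpow_one, mul_assoc]⟩

theorem dExp_nonneg (i j k : ℕ) : 0 ≤ dExp i j k := by
  unfold dExp
  split_ifs <;> norm_num

theorem neg_one_le_cExp (n : ℕ) (i j : Fin n) : -1 ≤ cExp n i j := by
  unfold cExp
  split_ifs <;> norm_num

theorem cExp_le_two (n : ℕ) (i j : Fin n) : cExp n i j ≤ 2 := by
  unfold cExp
  split_ifs <;> norm_num

theorem cExp_nonpos_of_le {n : ℕ} {i j : Fin n} (h : i ≤ j) : cExp n i j ≤ 0 := by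
  have : (i : ℕ) ≤ j := h
  unfold cExp
  split_ifs <;> omega

theorem cExp_le_one_of_eq_succ {n : ℕ} {i j : Fin n} (h : (i : ℕ) = j + 1) : cExp n i j ≤ 1 := by
  unfold cExp
  split_ifs <;> omega

theorem cExp_zero_last {n : ℕ} {i j : Fin n} (hi : (i : ℕ) = 0) (hj : (j : ℕ) = n - 1) :
    cExp n i j ≤ -1 := by
  unfold cExp
  split_ifs <;> omega

end XPow

section TiledOrder

variable {K : Type*} [Field K] {n : ℕ}
  {Λ : Subalgebra K[X] (Matrix (Fin n) (Fin n) (RatFunc K))}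

theorem coe_mem_xPow
    (hΛ : (Λ : Set (Matrix (Fin n) (Fin n) (RatFunc K))) = lambdaCarrier K n)
    (a : Λ) (k l : Fin n) :
    (a : Matrix (Fin n) (Fin n) (RatFunc K)) k l ∈ xPow K (cExp n k l) := by
  have : (a : Matrix (Fin n) (Fin n) (RatFunc K)) ∈ lambdaCarrier K n := hΛ ▸ a.2
  exact this k l

/-- The element of the tiled order with entry `X ^ a` at `(i, j)` and zeros elsewhere. -/
def tiledUnit (hΛ : (Λ : Set (Matrix (Fin n) (Fin n) (RatFunc K))) = lambdaCarrier K n)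
    (i j : Fin n) (a : ℤ) (h : cExp n i j ≤ a) : Λ :=
  ⟨Matrix.single i j (RatFunc.X ^ a), by
    rw [← SetLike.mem_coe, hΛ]
    intro k l
    rw [Matrix.single_apply]
    split_ifs with hkl
    · obtain ⟨rfl, rfl⟩ := hkl
      exact X_zpow_mem_xPow h
    · exact zero_mem_xPow _⟩

section MatrixUnits

variable (hΛ : (Λ : Set (Matrix (Fin n) (Fin n) (RatFunc K))) = lambdaCarrier K n)

theorem tiledUnit_mul {i j k : Fin n} {a b c : ℤ} (h₁ : cExp n i j ≤ a) (h₂ : cExp n j k ≤ b)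
    (h₃ : cExp n i k ≤ c) (hc : a + b = c) :
    tiledUnit hΛ i j a h₁ * tiledUnit hΛ j k b h₂ = tiledUnit hΛ i k c h₃ := by
  subst hc
  apply Subtype.ext
  simp [tiledUnit, Matrix.single_mul_single_same, zpow_add₀ (RatFunc.X_ne_zero (K := K))]

theorem tiledUnit_mul_of_ne {i j k l : Fin n} {a b : ℤ} (h₁ : cExp n i j ≤ a)
    (h₂ : cExp n k l ≤ b) (hjk : j ≠ k) :
    tiledUnit hΛ i j a h₁ * tiledUnit hΛ k l b h₂ = 0 := by
  apply Subtype.ext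
  simp [tiledUnit, Matrix.single_mul_single_of_ne, hjk]

theorem X_pow_smul_tiledUnit {i j : Fin n} {a b : ℤ} (m : ℕ) (h₁ : cExp n i j ≤ a)
    (h₂ : cExp n i j ≤ b) (hb : a + m = b) :
    (X ^ m : K[X]) • tiledUnit hΛ i j a h₁ = tiledUnit hΛ i j b h₂ := by
  subst hb
  apply Subtype.ext
  simp only [tiledUnit, SetLike.val_smul, Matrix.smul_single]
  rw [Algebra.smul_def, map_pow, RatFunc.algebraMap_X, zpow_add₀ RatFunc.X_ne_zero, zpow_natCast,
    mul_comm]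

theorem sum_tiledUnit_diag :
    ∑ k, tiledUnit hΛ k k 0 (cExp_nonpos_of_le le_rfl) = 1 := by
  apply Subtype.ext
  simp [tiledUnit, Matrix.sum_single_one]

/-- The first-row matrix unit `E_{0k}`, an element of the tiled order. -/
def rowUnit [NeZero n] (k : Fin n) : Λ := tiledUnit hΛ 0 k 0 (cExp_nonpos_of_le (Fin.zero_le k))

variable [NeZero n]

theorem X_smul_rowUnit_mul (a : Λ) (k : Fin n) : ∃ p : Fin n → K[X],
    (∀ l, RatFunc.X * (a : Matrix (Fin n) (Fin n) (RatFunc K)) k l =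
      algebraMap K[X] (RatFunc K) (p l)) ∧
    (X : K[X]) • (rowUnit hΛ k * a) = ∑ l, p l • rowUnit hΛ l := by
  choose p hp using fun l =>
    exists_X_mul_eq_algebraMap_of_mem_xPow (neg_one_le_cExp n k l) (coe_mem_xPow hΛ a k l)
  refine ⟨p, hp, Subtype.ext ?_⟩
  ext r s
  simp only [rowUnit, tiledUnit, zpow_zero, SetLike.val_smul, MulMemClass.coe_mul,
    AddSubmonoidClass.coe_finsetSum, Matrix.smul_apply, Matrix.sum_apply]
  by_cases hr : r = 0
  · subst hr
    simp [Matrix.single_apply, Algebra.smul_def, hp]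
  · simp [Algebra.smul_def, hr, Ne.symm hr]

theorem rowUnit_mul_diag (k l : Fin n) :
    rowUnit hΛ k * tiledUnit hΛ l l 0 (cExp_nonpos_of_le le_rfl) =
      if k = l then rowUnit hΛ k else 0 := by
  split_ifs with h
  · subst h
    exact tiledUnit_mul hΛ _ _ _ (by simp)
  · exact tiledUnit_mul_of_ne hΛ _ _ h

theorem rowUnit_zero_mul (k : Fin n) : rowUnit hΛ 0 * rowUnit hΛ k = rowUnit hΛ k :=
  tiledUnit_mul hΛ _ _ _ (by simp)

theorem rowUnit_smul_apply (k l : Fin n) (v : Fin n → RatFunc K) :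
    (rowUnit hΛ k • v) l = if l = 0 then v k else 0 := by
  change ((Matrix.single 0 k ((RatFunc.X : RatFunc K) ^ (0 : ℤ))) *ᵥ v) l = _
  rw [Matrix.single_mulVec]
  simp [Function.update_apply]

theorem rowUnit_smul_sum_diag_smul {M : Type*} [AddCommGroup M] [Module Λ M] (m : Fin n → M)
    (k : Fin n) :
    rowUnit hΛ k • ∑ l, tiledUnit hΛ l l 0 (cExp_nonpos_of_le le_rfl) • m l =
      rowUnit hΛ k • m k := by
  simp [Finset.smul_sum, smul_smul, rowUnit_mul_diag, ite_smul]

section CohenMacaulay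

variable {M : Type*} [AddCommGroup M] [Module Λ M] [Module K[X] M] [IsScalarTower K[X] Λ M]

theorem eq_zero_of_rowUnit_smul_eq_zero [Module.IsTorsionFree K[X] M] {m : M}
    (h : ∀ k, rowUnit hΛ k • m = 0) : m = 0 := by
  refine smul_right_injective M (pow_ne_zero 2 (Polynomial.X_ne_zero (R := K))) ?_
  have hk : ∀ k, (X ^ 2 : K[X]) • tiledUnit hΛ k k 0 (cExp_nonpos_of_le le_rfl) =
      tiledUnit hΛ k 0 2 (cExp_le_two n k 0) * rowUnit hΛ k := fun k => by
    rw [X_pow_smul_tiledUnit hΛ 2 _ (cExp_le_two n k k) (by norm_num)]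
    exact (tiledUnit_mul hΛ _ _ _ (by simp)).symm
  change (X ^ 2 : K[X]) • m = (X ^ 2 : K[X]) • (0 : M)
  rw [← one_smul Λ m, ← sum_tiledUnit_diag hΛ, Finset.sum_smul, Finset.smul_sum, smul_zero]
  refine Finset.sum_eq_zero fun k _ => ?_
  rw [← smul_assoc, hk, mul_smul, h, smul_zero]

/-- Every nonzero Cohen–Macaulay module admits a vector `b` and a functional `F` that exhibit a
rank-one direct summand of type `(i, j)`. -/
theorem exists_rank_one_summand (hn : 3 ≤ n) [Nontrivial M] [Module.Finite K[X] M]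
    [Module.IsTorsionFree K[X] M] :
    ∃ i j : ℕ, 1 ≤ i ∧ i < j ∧ j ≤ n ∧ ∃ (b : M) (F : M →ₗ[K[X]] K[X]),
      rowUnit hΛ 0 • b = b ∧ F b = 1 ∧ ∀ k : Fin n,
        (∃ m, (X ^ (dExp i j k).toNat : K[X]) • b = rowUnit hΛ k • m) ∧
        ∀ m, (X ^ (dExp i j k).toNat : K[X]) ∣ F (rowUnit hΛ k • m) := by
  have : SMulCommClass K[X] Λ M := IsScalarTower.to_smulCommClass
  let ρ : Fin n → M →ₗ[K[X]] M := fun k =>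
    { toFun := fun m => rowUnit hΛ k • m
      map_add' := fun _ _ => smul_add _ _ _
      map_smul' := fun p m => smul_comm _ _ _ }
  have hρ0 : ∀ k m, ρ 0 (ρ k m) = ρ k m := fun k m => by
    change rowUnit hΛ 0 • rowUnit hΛ k • m = rowUnit hΛ k • m
    rw [smul_smul, rowUnit_zero_mul]
  let L := LinearMap.range (ρ 0)
  have hL : ∀ k m, ρ k m ∈ L := fun k m => ⟨ρ k m, hρ0 k m⟩
  have hL0 : ∀ l ∈ L, ρ 0 l = l := by
    rintro _ ⟨m, rfl⟩
    exact hρ0 0 m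
  have hunit : ∀ (k l : Fin n) (a : ℕ) (h : cExp n l k ≤ a) (m : M),
      (X ^ a : K[X]) • ρ k m = ρ l (tiledUnit hΛ l k a h • m) := fun k l a h m => by
    change (X ^ a : K[X]) • rowUnit hΛ k • m = rowUnit hΛ l • tiledUnit hΛ l k a h • m
    rw [smul_smul, ← smul_assoc]
    congr 1
    have h0 : cExp n 0 k ≤ a := (cExp_nonpos_of_le (Fin.zero_le k)).trans (by positivity)
    exact (X_pow_smul_tiledUnit hΛ a _ h0 (by simp)).trans
      (tiledUnit_mul hΛ _ _ h0 (by simp)).symm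
  let N : ℕ → Submodule K[X] L := fun k =>
    if h : k < n then (LinearMap.range (ρ ⟨k, h⟩)).comap L.subtype else ⊥
  have mem_N : ∀ (k : ℕ) (h : k < n) (l : L), l ∈ N k ↔ ∃ m, ρ ⟨k, h⟩ m = l := fun k h l => by
    simp [N, h]
  have zero_eq : ∀ h : 0 < n, (⟨0, h⟩ : Fin n) = 0 := fun h => Fin.ext (by simp)
  have : Nontrivial L := by
    obtain ⟨m, hm⟩ := exists_ne (0 : M)
    obtain ⟨k, hk⟩ : ∃ k, ρ k m ≠ 0 := by
      by_contra! h
      exact hm (eq_zero_of_rowUnit_smul_eq_zero hΛ h)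
    exact ⟨⟨⟨_, hL k m⟩, 0, fun h => hk (congrArg Subtype.val h)⟩⟩
  have h0 : N 0 = ⊤ := by
    refine eq_top_iff.2 fun l _ => (mem_N 0 (by omega) l).2 ?_
    rw [zero_eq]
    exact l.2
  have hanti : ∀ k l, k ≤ l → l < n → N l ≤ N k := by
    intro k l hkl hl m hm
    obtain ⟨w, hw⟩ := (mem_N l hl m).1 hm
    refine (mem_N k (by omega) m).2 ⟨tiledUnit hΛ ⟨k, by omega⟩ ⟨l, hl⟩ (0 : ℕ)
      (cExp_nonpos_of_le hkl) • w, ?_⟩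
    rw [← hunit, hw, pow_zero, one_smul]
  have hX : ∀ k, k + 1 < n → ∀ m ∈ N k, (X : K[X]) • m ∈ N (k + 1) := by
    intro k hk m hm
    obtain ⟨w, hw⟩ := (mem_N k (by omega) m).1 hm
    refine (mem_N (k + 1) hk _).2 ⟨tiledUnit hΛ ⟨k + 1, hk⟩ ⟨k, by omega⟩ (1 : ℕ)
      (cExp_le_one_of_eq_succ rfl) • w, ?_⟩
    rw [← hunit, hw, pow_one]
    rfl
  have hX2 : ∀ m : L, (X ^ 2 : K[X]) • m ∈ N (n - 1) := by
    intro m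
    refine (mem_N (n - 1) (by omega) _).2 ⟨tiledUnit hΛ ⟨n - 1, by omega⟩ 0 (2 : ℕ)
      (cExp_le_two _ _ _) • m, ?_⟩
    rw [← hunit, hL0 _ m.2]
    rfl
  have hlast : ∀ m ∈ N (n - 1), ∃ l, m = (X : K[X]) • l := by
    intro m hm
    obtain ⟨w, hw⟩ := (mem_N (n - 1) (by omega) m).1 hm
    have hc : cExp n 0 ⟨n - 1, by omega⟩ ≤ -1 := cExp_zero_last (by simp) rfl
    refine ⟨⟨ρ 0 (tiledUnit hΛ 0 ⟨n - 1, by omega⟩ (-1) hc • w), hL _ _⟩, Subtype.ext ?_⟩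
    change (m : M) = (X : K[X]) • rowUnit hΛ 0 • tiledUnit hΛ 0 _ (-1) hc • w
    rw [← hw, smul_smul, ← smul_assoc]
    change rowUnit hΛ _ • w = _
    congr 1
    have := X_pow_smul_tiledUnit hΛ 1 hc (b := 0) (cExp_nonpos_of_le (Fin.zero_le _)) (by simp)
    rw [rowUnit, rowUnit, tiledUnit_mul hΛ _ hc hc (by simp), ← this, pow_one]
  obtain ⟨i, j, hi, hij, hj, b, f, hfb, hbf⟩ := exists_rank_one_summand_of_chain (L := L)
    (n := n) (by omega) N h0 hanti hX hX2 hlast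
  refine ⟨i, j, hi, hij, hj, b, f ∘ₗ (ρ 0).rangeRestrict, hL0 _ b.2, ?_,
    fun k => ⟨?_, fun m => ?_⟩⟩
  · rw [← hfb]
    exact congrArg f (Subtype.ext (hL0 _ b.2))
  · obtain ⟨m, hm⟩ := (mem_N k k.2 _).1 (hbf k k.2).1
    exact ⟨m, hm.symm⟩
  · have := (hbf k k.2).2 ⟨_, hL k m⟩ ((mem_N k k.2 _).2 ⟨m, rfl⟩)
    convert this using 2
    exact congrArg f (Subtype.ext (hρ0 k m))

/-- The map to the column space determined by a `K[X]`-linear functional. -/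
def toColumn [SMulCommClass K[X] Λ M] (F : M →ₗ[K[X]] K[X]) :
    M →ₗ[Λ] (Fin n → RatFunc K) where
  toFun m k := algebraMap K[X] (RatFunc K) (F (rowUnit hΛ k • m))
  map_add' m m' := by
    ext k
    simp
  map_smul' a m := by
    ext k
    obtain ⟨p, hp, hpa⟩ := X_smul_rowUnit_mul hΛ a k
    refine mul_left_cancel₀ (RatFunc.X_ne_zero (K := K)) ?_
    change _ = RatFunc.X * ((a : Matrix (Fin n) (Fin n) (RatFunc K)) *ᵥ _) k
    rw [smul_smul, ← RatFunc.algebraMap_X, ← map_mul, ← smul_eq_mul, ← map_smul, ← smul_assoc, hpa,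
      Finset.sum_smul, map_sum, map_sum, Matrix.mulVec, dotProduct, Finset.mul_sum]
    refine Finset.sum_congr rfl fun l _ => ?_
    rw [smul_assoc, map_smul, smul_eq_mul, map_mul, ← hp, RatFunc.algebraMap_X, mul_assoc]

/-- The submodule of vectors all of whose components are the multiples of `b` prescribed by `F`. -/
def lineSubmodule [Module.IsTorsionFree K[X] M] [SMulCommClass K[X] Λ M] (F : M →ₗ[K[X]] K[X])
    (b : M) : Submodule Λ M where
  carrier := {m | ∀ k, rowUnit hΛ k • m = F (rowUnit hΛ k • m) • b}
  zero_mem' k := by simp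
  add_mem' hm hm' k := by rw [smul_add, map_add, add_smul, ← hm k, ← hm' k]
  smul_mem' a m hm k := by
    obtain ⟨p, -, hpa⟩ := X_smul_rowUnit_mul hΛ a k
    refine smul_right_injective M (Polynomial.X_ne_zero (R := K)) ?_
    have hXa : (X : K[X]) • rowUnit hΛ k • a • m = ∑ l, p l • rowUnit hΛ l • m := by
      rw [smul_smul (rowUnit hΛ k), ← smul_assoc, hpa, Finset.sum_smul]
      simp only [smul_assoc]
    change (X : K[X]) • rowUnit hΛ k • a • m = (X : K[X]) • F (rowUnit hΛ k • a • m) • b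
    rw [← smul_assoc X (F _) b, ← F.map_smul, hXa, map_sum, Finset.sum_smul]
    refine Finset.sum_congr rfl fun l _ => ?_
    rw [F.map_smul, smul_assoc, ← hm l]

end CohenMacaulay

end MatrixUnits

/-- An indecomposable Cohen–Macaulay module is isomorphic to some `(i, j)`. -/
theorem exists_linearEquiv_of_indecomposable (hn : 3 ≤ n)
    (hΛ : (Λ : Set (Matrix (Fin n) (Fin n) (RatFunc K))) = lambdaCarrier K n)
    {M : Type*} [AddCommGroup M] [Module Λ M] [Module K[X] M] [IsScalarTower K[X] Λ M]
    [Nontrivial M] [Module.Finite K[X] M] [Module.IsTorsionFree K[X] M]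
    (hM : ¬ ∃ A B : Submodule Λ M, IsCompl A B ∧ A ≠ ⊥ ∧ B ≠ ⊥)
    (E : ℕ → ℕ → Submodule Λ (Fin n → RatFunc K))
    (hE : ∀ i j : ℕ, 1 ≤ i → i < j → j ≤ n →
      (E i j : Set (Fin n → RatFunc K)) = ijSet K n i j) :
    ∃ i j : ℕ, 1 ≤ i ∧ i < j ∧ j ≤ n ∧ Nonempty (M ≃ₗ[Λ] E i j) := by
  have : SMulCommClass K[X] Λ M := IsScalarTower.to_smulCommClass
  have : NeZero n := ⟨by omega⟩
  obtain ⟨i, j, hi, hij, hj, b, F, hb0, hFb, hbF⟩ := exists_rank_one_summand hΛ (M := M) hn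
  refine ⟨i, j, hi, hij, hj, ?_⟩
  have mem_ker : ∀ m, m ∈ LinearMap.ker (toColumn hΛ F) ↔ ∀ k, F (rowUnit hΛ k • m) = 0 :=
    fun m => by
      rw [LinearMap.mem_ker, funext_iff]
      exact forall_congr' fun k =>
        map_eq_zero_iff _ (IsFractionRing.injective K[X] (RatFunc K))
  have lift : ∀ p : Fin n → K[X], (∀ k : Fin n, X ^ (dExp i j k).toNat ∣ p k) →
      ∃ m : M, ∀ k, rowUnit hΛ k • m = p k • b := fun p hp => by
    choose q hq using hp
    choose m hm using fun k : Fin n => (hbF k).1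
    refine ⟨∑ l, tiledUnit hΛ l l 0 (cExp_nonpos_of_le le_rfl) • q l • m l, fun k => ?_⟩
    rw [rowUnit_smul_sum_diag_smul, smul_comm, ← hm, smul_smul, hq, mul_comm]
  have hFpb : ∀ p : K[X], F (p • b) = p := fun p => by rw [map_smul, hFb, smul_eq_mul, mul_one]
  have hcompl : IsCompl (LinearMap.ker (toColumn hΛ F)) (lineSubmodule hΛ F b) := by
    rw [isCompl_iff, Submodule.disjoint_def, codisjoint_iff, eq_top_iff]
    refine ⟨fun m hm hm' => eq_zero_of_rowUnit_smul_eq_zero hΛ fun k => ?_, fun m _ => ?_⟩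
    · rw [hm' k, (mem_ker m).1 hm k, zero_smul]
    · obtain ⟨m', hm'⟩ := lift (fun k => F (rowUnit hΛ k • m)) fun k => (hbF k).2 m
      rw [← sub_add_cancel m m']
      refine Submodule.add_mem_sup ((mem_ker _).2 fun k => ?_) fun k => ?_
      · rw [smul_sub, map_sub, hm', hFpb, sub_self]
      · rw [hm', hFpb]
  have hb : b ∈ lineSubmodule hΛ F b := fun k => by
    rw [← hb0, smul_smul]
    by_cases hk : k = 0
    · rw [hk, rowUnit_zero_mul, hb0, hFb, one_smul]
    · have : rowUnit hΛ k * rowUnit hΛ 0 = 0 := tiledUnit_mul_of_ne hΛ _ _ hk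
      simp [this]
  have hline : lineSubmodule hΛ F b ≠ ⊥ := fun h => by
    rw [h, Submodule.mem_bot] at hb
    simp [hb] at hFb
  have hker : LinearMap.ker (toColumn hΛ F) = ⊥ := by
    by_contra h
    exact hM ⟨_, _, hcompl, h, hline⟩
  have hrange : LinearMap.range (toColumn hΛ F) = E i j := by
    refine SetLike.coe_injective ?_
    rw [hE i j hi hij hj]
    ext v
    constructor
    · rintro ⟨m, rfl⟩ k
      exact (mem_xPow_iff_of_nonneg (dExp_nonneg _ _ _)).2 ⟨_, (hbF k).2 m, rfl⟩
    · intro hv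
      choose p hp hvp using fun k : Fin n => (mem_xPow_iff_of_nonneg (dExp_nonneg _ _ _)).1 (hv k)
      obtain ⟨m, hm⟩ := lift p hp
      refine ⟨m, funext fun k => ?_⟩
      rw [hvp k]
      change algebraMap K[X] (RatFunc K) (F (rowUnit hΛ k • m)) = _
      rw [hm, hFpb]
  exact ⟨(LinearEquiv.ofInjective _ (LinearMap.ker_eq_bot.1 hker)).trans
    (LinearEquiv.ofEq _ _ hrange)⟩

/-- Any two nonzero polynomial column vectors have a common nonzero multiple over the order. -/
theorem exists_smul_eq_smul_ne_zero [NeZero n]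
    (hΛ : (Λ : Set (Matrix (Fin n) (Fin n) (RatFunc K))) = lambdaCarrier K n)
    {u v : Fin n → RatFunc K} (hu : u ≠ 0) (hv : v ≠ 0)
    (hup : ∀ k, ∃ p : K[X], u k = algebraMap K[X] (RatFunc K) p)
    (hvp : ∀ k, ∃ p : K[X], v k = algebraMap K[X] (RatFunc K) p) :
    ∃ a c : Λ, a • u = c • v ∧ a • u ≠ 0 := by
  obtain ⟨k, hk⟩ := Function.ne_iff.1 hu
  obtain ⟨l, hl⟩ := Function.ne_iff.1 hv
  obtain ⟨p, hp⟩ := hup k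
  obtain ⟨q, hq⟩ := hvp l
  have key : ∀ (r : K[X]) (k s : Fin n) (w : Fin n → RatFunc K),
      ((r • rowUnit hΛ k) • w) s = if s = 0 then algebraMap K[X] (RatFunc K) r * w k else 0 := by
    intro r k s w
    rw [← mul_ite_zero, ← rowUnit_smul_apply hΛ k s w, ← Algebra.smul_def]
    exact congrFun (Matrix.smul_mulVec r _ w) s
  refine ⟨q • rowUnit hΛ k, p • rowUnit hΛ l, funext fun s => ?_, fun h => ?_⟩
  · rw [key, key, hp, hq, mul_comm]
  · have := congrFun h 0
    rw [key, if_pos rfl, ← hq] at this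
    exact mul_ne_zero hl hk this

/-- The modules `(i, j)` are indecomposable. -/
theorem indecomposable_of_coe_eq_ijSet [NeZero n]
    (hΛ : (Λ : Set (Matrix (Fin n) (Fin n) (RatFunc K))) = lambdaCarrier K n)
    {i j : ℕ} (E : Submodule Λ (Fin n → RatFunc K))
    (hE : (E : Set (Fin n → RatFunc K)) = ijSet K n i j) :
    Nontrivial E ∧ ∀ A B : Submodule Λ E, Disjoint A B → A = ⊥ ∨ B = ⊥ := by
  have hpoly : ∀ (v : E) (k : Fin n), ∃ p : K[X], v.1 k = algebraMap K[X] (RatFunc K) p := by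
    intro v k
    have hv : v.1 ∈ ijSet K n i j := hE ▸ v.2
    obtain ⟨p, -, hp⟩ := (mem_xPow_iff_of_nonneg (dExp_nonneg _ _ _)).1 (hv k)
    exact ⟨p, hp⟩
  constructor
  · have h : (fun k : Fin n => (RatFunc.X : RatFunc K) ^ dExp i j k) ∈ E := by
      rw [← SetLike.mem_coe, hE]
      exact fun k => X_zpow_mem_xPow le_rfl
    refine ⟨⟨⟨_, h⟩, 0, fun h0 => ?_⟩⟩
    exact zpow_ne_zero _ RatFunc.X_ne_zero (congrFun (congrArg Subtype.val h0) 0)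
  · intro A B hAB
    by_contra! h
    obtain ⟨a, ha, ha0⟩ := A.ne_bot_iff.1 h.1
    obtain ⟨b, hb, hb0⟩ := B.ne_bot_iff.1 h.2
    obtain ⟨s, t, hst, hs⟩ := exists_smul_eq_smul_ne_zero hΛ (u := a.1) (v := b.1)
      (fun h => ha0 (Subtype.ext h)) (fun h => hb0 (Subtype.ext h)) (hpoly a) (hpoly b)
    have heq : s • a = t • b := Subtype.ext hst
    exact hs (congrArg Subtype.val
      (Submodule.disjoint_def.1 hAB _ (A.smul_mem s ha) (heq ▸ B.smul_mem t hb)))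

end TiledOrder

/-- Classification of indecomposable Cohen–Macaulay `Λ`-modules: a Cohen–Macaulay `Λ`-module
`M` is indecomposable if and only if it is isomorphic to `(i,j)` for some `1 ≤ i < j ≤ n`. -/
theorem statement4 (K : Type) [Field K] (n : ℕ) (hn : 3 ≤ n)
    (Λ : Subalgebra (Polynomial K) (Matrix (Fin n) (Fin n) (RatFunc K)))
    (hΛ : (Λ : Set (Matrix (Fin n) (Fin n) (RatFunc K))) = lambdaCarrier K n)
    (E : ℕ → ℕ → Submodule ↥Λ (Fin n → RatFunc K))
    (hE : ∀ i j : ℕ, 1 ≤ i → i < j → j ≤ n →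
      (E i j : Set (Fin n → RatFunc K)) = ijSet K n i j)
    (M : Type u) [AddCommGroup M] [Module ↥Λ M]
    [Module (Polynomial K) M] [IsScalarTower (Polynomial K) ↥Λ M]
    (hfin : Module.Finite (Polynomial K) M)
    (htf : NoZeroSMulDivisors (Polynomial K) M) :
    (Nontrivial M ∧ ¬ ∃ A B : Submodule ↥Λ M, IsCompl A B ∧ A ≠ ⊥ ∧ B ≠ ⊥)
      ↔ ∃ i j : ℕ, 1 ≤ i ∧ i < j ∧ j ≤ n ∧ Nonempty (M ≃ₗ[↥Λ] ↥(E i j)) := by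
  have : NeZero n := ⟨by omega⟩
  have : Module.IsTorsionFree K[X] M := inferInstance
  constructor
  · rintro ⟨hnt, hM⟩
    exact exists_linearEquiv_of_indecomposable hn hΛ hM E hE
  · rintro ⟨i, j, hi, hij, hj, ⟨φ⟩⟩
    obtain ⟨hnt, hind⟩ := indecomposable_of_coe_eq_ijSet hΛ (E i j) (hE i j hi hij hj)
    refine ⟨φ.toEquiv.nontrivial, ?_⟩
    rintro ⟨A, B, hAB, hA, hB⟩
    rcases hind (A.map φ.toLinearMap) (B.map φ.toLinearMap)
      (Submodule.disjoint_map φ.injective hAB.disjoint) with h | h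
    · exact hA (Submodule.map_eq_bot_iff.1 h)
    · exact hB (Submodule.map_eq_bot_iff.1 h)
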